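/- Uniform fractional-moment bound for the singular integral of an exactly scale-invariant field (Lemma A of the multifractal analysis, d = 2): Let (X̄_ε)_{ε∈(0,1]} be a family of jointly measurable centered Gaussian fields on ℝ² with covariance E[X̄_ε(x)X̄_ε(y)] equal to 0 if |x−y| > 1, to ln(1/|x−y|) if ε ≤ |x−y| ≤ 1, and to ln(1/ε) + 2(1 − |x−y|^{1/2}/ε^{1/2}) if |x−y| ≤ ε. Let γ ∈ [0,2) and let a ∈ (0,1] satisfy (2 − γ²/2)a − (γ²/2)a² > 0. Then there exists a constant C > 0 such that for all ε ∈ (0,1]: E[( ∫_{[0,1/2]²} exp(γ X̄_ε(v) − (γ²/2) E[X̄_ε(v)²]) · (|v| + ε)^{−γ²} dv )^a] ≤ C. -/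

import Mathlib

open MeasureTheory ProbabilityTheory Filter

noncomputable section

def IsCenteredGaussian {Ω : Type*} [MeasurableSpace Ω] (P : Measure Ω) (Z : Ω → ℝ) : Prop :=
  ∃ v : NNReal, Measure.map Z P = gaussianReal 0 v

/-- The covariance of the white-noise decomposition of the exactly scale invariant
log-correlated field on `ℝ²`. -/
def exactCov (ε : ℝ) (r : ℝ) : ℝ :=
  if 1 < r then 0
  else if ε ≤ r then Real.log (1 / r)
  else Real.log (1 / ε) + 2 * (1 - Real.sqrt r / Real.sqrt ε)


lemma centered_memLp {Ω : Type*} [MeasurableSpace Ω] {P : Measure Ω} {Z : Ω → ℝ}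
    (hZ : Measurable Z) (h : IsCenteredGaussian P Z) : MemLp Z 2 P := by
  obtain ⟨v, hv⟩ := h
  have h1 : MemLp id 2 (Measure.map Z P) := by
    rw [hv]; exact memLp_id_gaussianReal 2
  exact (memLp_map_measure_iff h1.aestronglyMeasurable hZ.aemeasurable).1 h1

lemma centered_exp {Ω : Type*} [MeasurableSpace Ω] {P : Measure Ω} [IsProbabilityMeasure P]
    {Z : Ω → ℝ}
    (hZ : Measurable Z) (h : IsCenteredGaussian P Z) :
    ∫⁻ ω, ENNReal.ofReal (Real.exp (Z ω)) ∂P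
      = ENNReal.ofReal (Real.exp ((∫ ω, Z ω ^ 2 ∂P) / 2)) := by
  obtain ⟨v, hv⟩ := h
  have hvar : ∫ ω, Z ω ^ 2 ∂P = v := by
    have h1 : ∫ x, x ^ 2 ∂(Measure.map Z P) = ∫ ω, Z ω ^ 2 ∂P :=
      integral_map hZ.aemeasurable (by fun_prop)
    rw [← h1, hv]
    have h2 := variance_id_gaussianReal (μ := 0) (v := v)
    rw [variance_of_integral_eq_zero (by fun_prop) (by simp)] at h2
    simpa using h2
  have hint : Integrable (fun ω => Real.exp (Z ω)) P := by
    have h1 := integrable_exp_mul_gaussianReal (μ := 0) (v := v) 1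
    rw [← hv] at h1
    simpa [Function.comp_def] using h1.comp_measurable hZ
  rw [← ofReal_integral_eq_lintegral_ofReal hint
    (Filter.Eventually.of_forall fun ω => (Real.exp_pos _).le), hvar]
  have h3 := mgf_gaussianReal hv 1
  simp only [mgf, one_mul, zero_add, one_pow, mul_one] at h3
  rw [h3]

lemma gauss_exp {Ω E : Type*} [MeasurableSpace Ω] {P : Measure Ω} [IsProbabilityMeasure P]
    (Y : E → Ω → ℝ) (hm : ∀ x, Measurable (Y x))
    (hg : ∀ (m : ℕ) (xs : Fin m → E) (c : Fin m → ℝ),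
        IsCenteredGaussian P (fun ω => ∑ i, c i * Y (xs i) ω))
    (K : E → E → ℝ) (hK : ∀ x y, ∫ ω, Y x ω * Y y ω ∂P = K x y)
    (m : ℕ) (xs : Fin m → E) (c : Fin m → ℝ) :
    ∫⁻ ω, ENNReal.ofReal (Real.exp (∑ i, c i * Y (xs i) ω)) ∂P
      = ENNReal.ofReal (Real.exp ((∑ i, ∑ j, c i * c j * K (xs i) (xs j)) / 2)) := by
  rw [centered_exp (Finset.measurable_sum _ fun i _ => (hm _).const_mul _) (hg m xs c)]
  have hL : ∀ x, MemLp (Y x) 2 P := fun x => by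
    refine centered_memLp (hm x) ?_
    simpa using hg 1 (fun _ => x) (fun _ => 1)
  have hI : ∀ x y, Integrable (fun ω => Y x ω * Y y ω) P := fun x y =>
    (hL x).integrable_mul (hL y)
  congr 3
  have : ∀ ω, (∑ i, c i * Y (xs i) ω) ^ 2
      = ∑ i, ∑ j, c i * c j * (Y (xs i) ω * Y (xs j) ω) := by
    intro ω
    rw [sq, Finset.sum_mul_sum]
    refine Finset.sum_congr rfl fun i _ => Finset.sum_congr rfl fun j _ => by ring
  simp_rw [this]
  rw [integral_finsetSum _ (fun i _ => integrable_finsetSum _ fun j _ => (hI _ _).const_mul _)]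
  refine Finset.sum_congr rfl fun i _ => ?_
  rw [integral_finsetSum _ (fun j _ => (hI _ _).const_mul _)]
  refine Finset.sum_congr rfl fun j _ => ?_
  rw [integral_const_mul, hK]

lemma exactCov_lower {ε r l : ℝ} (hε : 0 < ε) (hεl : ε ≤ l)
    (hr : r ≤ 2 * l) : Real.log (1 / l) - Real.log 2 ≤ exactCov ε r := by
  have hl : 0 < l := hε.trans_le hεl
  have h2 : Real.log (1 / l) - Real.log 2 = - Real.log (2 * l) := by
    rw [Real.log_mul (by norm_num) hl.ne']; simp; ring
  rw [h2]
  unfold exactCov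
  split_ifs with h h'
  · have := Real.log_nonneg (show 1 ≤ 2 * l by linarith)
    linarith
  · have := Real.log_le_log (hε.trans_le h') hr
    simp; linarith
  · have := Real.log_le_log hε (show ε ≤ 2 * l by linarith)
    have h3 : Real.sqrt r / Real.sqrt ε ≤ 1 := by
      rw [div_le_one (Real.sqrt_pos.2 hε)]
      exact Real.sqrt_le_sqrt (by linarith)
    simp only [one_div, Real.log_inv]; linarith

lemma exactCov_upper {ε r : ℝ} (hr0 : 0 < r) (hr : r ≤ 1) :
    exactCov ε r ≤ Real.log (1 / r) + 2 := by
  unfold exactCov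
  rw [if_neg (by linarith)]
  split_ifs with h'
  · linarith
  · have := Real.log_le_log hr0 (show r ≤ ε by linarith)
    have : 0 ≤ Real.sqrt r / Real.sqrt ε := by positivity
    simp only [one_div, Real.log_inv]; linarith

lemma sum_log_lower (n : ℕ) :
    (n : ℝ) * Real.log n - n ≤ ∑ k ∈ Finset.range n, Real.log ((k : ℝ) + 1) := by
  induction n with
  | zero => simp
  | succ n ih =>
    rw [Finset.sum_range_succ]
    push_cast
    rcases Nat.eq_zero_or_pos n with rfl | hn
    · simp
    have hn' : (0 : ℝ) < n := by exact_mod_cast hn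
    have h1 : Real.log ((n + 1 : ℝ) / n) ≤ 1 / n := by
      have := Real.log_le_sub_one_of_pos (show (0 : ℝ) < (n + 1 : ℝ) / n by positivity)
      have h2 : (n + 1 : ℝ) / n - 1 = 1 / n := by field_simp; ring
      linarith
    rw [Real.log_div (by positivity) (by positivity)] at h1
    have h3 : (n : ℝ) * (Real.log (n + 1) - Real.log n) ≤ 1 := by
      calc _ ≤ (n : ℝ) * (1 / n) := by gcongr
        _ = 1 := by field_simp
    linarith

lemma sum_dist_le (N i : ℕ) (hi : i < N) (g : ℕ → ℝ) (hg : ∀ k < N, 0 ≤ g k) :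
    ∑ j ∈ Finset.range N, g (Nat.dist i j) ≤ 2 * ∑ k ∈ Finset.range N, g k := by
  rw [Finset.sum_comp g (fun j => Nat.dist i j)]
  have hsub : Finset.image (fun j => Nat.dist i j) (Finset.range N) ⊆ Finset.range N := by
    intro k hk
    simp only [Finset.mem_image, Finset.mem_range, Nat.dist] at hk ⊢
    obtain ⟨j, hj, rfl⟩ := hk
    omega
  rw [Finset.mul_sum]
  refine (Finset.sum_le_sum (g := fun k => 2 * g k) fun k hk => ?_).trans
    (Finset.sum_le_sum_of_subset_of_nonneg hsub fun k hk _ => ?_)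
  · have hk' := Finset.mem_range.1 (hsub hk)
    rw [nsmul_eq_mul]
    refine mul_le_mul_of_nonneg_right ?_ (hg k hk')
    have : (Finset.filter (fun a => Nat.dist i a = k) (Finset.range N)) ⊆ {i - k, i + k} := by
      intro a ha
      have ha := (Finset.mem_filter.1 ha).2
      simp only [Nat.dist, Finset.mem_insert, Finset.mem_singleton] at ha ⊢
      omega
    have h2 := (Finset.card_le_card this).trans Finset.card_le_two
    exact_mod_cast h2
  · have := hg k (Finset.mem_range.1 hk)
    positivity

/-- Points on a segment with well-controlled average covariance. -/
lemma exists_points {ε l : ℝ} (hε : 0 < ε) (hε1 : ε ≤ 1) (hl0 : 0 < l) (hl : l ≤ 1) :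
    ∃ (N : ℕ) (x : Fin N → EuclideanSpace ℝ (Fin 2)), 0 < N ∧ (∀ i, ‖x i‖ ≤ l) ∧
      ∑ i, ∑ j, exactCov ε ‖x i - x j‖ ≤ (N : ℝ) ^ 2 * (Real.log (1 / l) + 14) := by
  obtain ⟨M, hM⟩ := exists_nat_ge (Real.log (1 / ε))
  set N := M + 1 with hN
  have hN0 : 0 < N := by omega
  have hNr : (0 : ℝ) < N := by exact_mod_cast hN0
  have hN1 : (1 : ℝ) ≤ N := by exact_mod_cast hN0
  have hMN : Real.log (1 / ε) ≤ N := by rw [hN]; push_cast; linarith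
  set e : EuclideanSpace ℝ (Fin 2) := EuclideanSpace.single 0 1 with he
  have hen : ‖e‖ = 1 := by simp [he]
  have hL0 : 0 ≤ Real.log (1 / l) := Real.log_nonneg (by rw [le_div_iff₀ hl0]; linarith)
  refine ⟨N, fun i => (l * (i : ℕ) / N) • e, hN0, fun i => ?_, ?_⟩
  · rw [norm_smul, hen, mul_one, Real.norm_of_nonneg (by positivity), div_le_iff₀ hNr]
    have : ((i : ℕ) : ℝ) ≤ N := by exact_mod_cast i.2.le
    gcongr
  have hnorm : ∀ i j : Fin N, ‖(l * (i : ℕ) / N) • e - (l * (j : ℕ) / N) • e‖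
      = l * (Nat.dist i j : ℕ) / N := by
    intro i j
    rw [← sub_smul, norm_smul, hen, mul_one, Real.norm_eq_abs]
    have : ((Nat.dist i j : ℕ) : ℝ) = |((i : ℕ) : ℝ) - (j : ℕ)| := by
      rcases le_total (i : ℕ) (j : ℕ) with h | h
      · rw [Nat.dist_eq_sub_of_le h, Nat.cast_sub h, abs_sub_comm, abs_of_nonneg]
        simpa using h
      · rw [Nat.dist_eq_sub_of_le_right h, Nat.cast_sub h, abs_of_nonneg]
        simpa using h
    rw [this, ← sub_div, abs_div, abs_of_pos hNr, ← mul_sub, abs_mul, abs_of_pos hl0]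
  let h : ℕ → ℝ := fun k => if k = 0 then N + 2 else 2 + (Real.log N - Real.log k)
  have hh0 : ∀ k < N, 0 ≤ h k := by
    intro k hk
    simp only [h]
    split_ifs with hk0
    · positivity
    · have : Real.log k ≤ Real.log N :=
        Real.log_le_log (by exact_mod_cast Nat.pos_of_ne_zero hk0) (by exact_mod_cast hk.le)
      linarith
  have hKh : ∀ k < N, exactCov ε (l * (k : ℕ) / N) ≤ Real.log (1 / l) + h k := by
    intro k hk
    simp only [h]
    split_ifs with hk0
    · subst hk0
      simp only [exactCov, Nat.cast_zero, mul_zero, zero_div, Real.sqrt_zero]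
      rw [if_neg (by norm_num), if_neg (by linarith)]
      linarith
    · have hk' : (0 : ℝ) < k := by exact_mod_cast Nat.pos_of_ne_zero hk0
      have hkN : (k : ℝ) ≤ N := by exact_mod_cast hk.le
      refine (exactCov_upper (by positivity) ?_).trans (le_of_eq ?_)
      · rw [div_le_one hNr]; nlinarith
      · simp only [one_div, Real.log_inv]
        rw [Real.log_div (by positivity) hNr.ne', Real.log_mul hl0.ne' hk'.ne']
        ring
  have hsum : ∑ k ∈ Finset.range N, h k ≤ 7 * N := by
    rw [hN, Finset.sum_range_succ']
    have h1 : ∀ k ∈ Finset.range M, h (k + 1) = (2 + Real.log N) - Real.log ((k : ℝ) + 1) := by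
      intro k _
      simp only [h, if_neg (Nat.succ_ne_zero k)]
      push_cast; ring
    rw [Finset.sum_congr rfl h1, Finset.sum_sub_distrib]
    have h2 := sum_log_lower N
    rw [hN, Finset.sum_range_succ] at h2
    have h3 : (M : ℝ) + 1 = N := by rw [hN]; push_cast; ring
    simp only [Finset.sum_const, Finset.card_range, nsmul_eq_mul, ← hN, h3] at h2 ⊢
    have h4 : (M : ℝ) = N - 1 := by linarith
    simp only [h, if_true, h4]
    nlinarith
  simp_rw [hnorm]
  have hrow : ∀ i : Fin N, ∑ j : Fin N, exactCov ε (l * (Nat.dist i j : ℕ) / N)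
      ≤ N * (Real.log (1 / l) + 14) := by
    intro i
    rw [Fin.sum_univ_eq_sum_range (fun j => exactCov ε (l * (Nat.dist i j : ℕ) / N)) N]
    calc _ ≤ ∑ j ∈ Finset.range N, (Real.log (1 / l) + h (Nat.dist i j)) := by
          refine Finset.sum_le_sum fun j hj => hKh _ ?_
          have := Finset.mem_range.1 hj
          have := i.2
          simp only [Nat.dist]; omega
      _ = N * Real.log (1 / l) + ∑ j ∈ Finset.range N, h (Nat.dist i j) := by
          simp [Finset.sum_add_distrib]
      _ ≤ N * Real.log (1 / l) + 2 * (7 * N) := by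
          have := sum_dist_le N i i.2 h hh0
          linarith
      _ = _ := by ring
  calc _ ≤ ∑ i : Fin N, N * (Real.log (1 / l) + 14) := Finset.sum_le_sum fun i _ => hrow i
    _ = _ := by simp; ring

lemma tilt_exp {Ω E : Type*} [MeasurableSpace Ω] {P : Measure Ω} [IsProbabilityMeasure P]
    (Y : E → Ω → ℝ) (hm : ∀ x, Measurable (Y x))
    (hg : ∀ (m : ℕ) (xs : Fin m → E) (c : Fin m → ℝ),
        IsCenteredGaussian P (fun ω => ∑ i, c i * Y (xs i) ω))
    (K : E → E → ℝ) (hK : ∀ x y, ∫ ω, Y x ω * Y y ω ∂P = K x y)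
    (N : ℕ) (hN : 0 < N) (x : Fin N → E) (A D γ s : ℝ) (v : E) (hγ : 0 ≤ γ) (hs : 0 ≤ s)
    (hA : ∑ i, ∑ j, K (x i) (x j) ≤ (N : ℝ) ^ 2 * A) (hD : ∀ i, D ≤ K v (x i)) (b : ℝ) :
    ∫⁻ ω, ENNReal.ofReal (Real.exp (γ * Y v ω + b - s * ∑ i, (1 / (N : ℝ)) * Y (x i) ω)) ∂P
      ≤ ENNReal.ofReal (Real.exp (b + γ ^ 2 / 2 * K v v - γ * s * D + s ^ 2 / 2 * A)) := by
  have hNr : (0 : ℝ) < N := by exact_mod_cast hN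
  have hsymm : ∀ x y, K x y = K y x := fun x y => by
    rw [← hK, ← hK]; simp_rw [mul_comm]
  have key := gauss_exp Y hm hg K hK (N + 1) (Fin.cons v x) (Fin.cons γ fun _ => -(s / N))
  simp only [Fin.sum_univ_succ, Fin.cons_zero, Fin.cons_succ] at key
  have h1 : ∀ ω, ENNReal.ofReal (Real.exp (γ * Y v ω + b - s * ∑ i, (1 / (N : ℝ)) * Y (x i) ω))
      = ENNReal.ofReal (Real.exp b) *
        ENNReal.ofReal (Real.exp (γ * Y v ω + ∑ i, -(s / N) * Y (x i) ω)) := by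
    intro ω
    rw [← ENNReal.ofReal_mul (Real.exp_pos _).le, ← Real.exp_add]
    congr 2
    rw [← Finset.mul_sum, ← Finset.mul_sum]
    ring
  simp_rw [h1]
  rw [lintegral_const_mul' _ _ ENNReal.ofReal_ne_top, key,
    ← ENNReal.ofReal_mul (Real.exp_pos _).le, ← Real.exp_add]
  refine ENNReal.ofReal_le_ofReal (Real.exp_le_exp.2 ?_)
  rw [Finset.sum_add_distrib]
  simp_rw [fun i => hsymm (x i) v, ← Finset.mul_sum]
  have hDs : (N : ℝ) * D ≤ ∑ i, K v (x i) := by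
    have := Finset.sum_le_sum (s := Finset.univ) fun i _ => hD i
    simpa using this
  have e1 : γ * (s / N) * (N * D) ≤ γ * (s / N) * ∑ i, K v (x i) :=
    mul_le_mul_of_nonneg_left hDs (by positivity)
  have e2 : (s / N) ^ 2 * ∑ i, ∑ j, K (x i) (x j) ≤ (s / N) ^ 2 * ((N : ℝ) ^ 2 * A) :=
    mul_le_mul_of_nonneg_left hA (by positivity)
  have e3 : γ * (s / N) * (N * D) = γ * s * D := by field_simp
  have e4 : (s / N) ^ 2 * ((N : ℝ) ^ 2 * A) = s ^ 2 * A := by field_simp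
  rw [e3] at e1
  rw [e4] at e2
  linarith

lemma exp_eq_ofReal_rpow (t a : ℝ) : ENNReal.ofReal (Real.exp t) ^ a
    = ENNReal.ofReal (Real.exp (t * a)) := by
  rw [ENNReal.ofReal_rpow_of_pos (Real.exp_pos _), ← Real.exp_mul]

lemma annulus_bound {Ω : Type*} [MeasurableSpace Ω] {P : Measure Ω} [IsProbabilityMeasure P]
    (Y : EuclideanSpace ℝ (Fin 2) → Ω → ℝ)
    (hm : Measurable (fun p : EuclideanSpace ℝ (Fin 2) × Ω => Y p.1 p.2))
    (hg : ∀ (m : ℕ) (xs : Fin m → EuclideanSpace ℝ (Fin 2)) (c : Fin m → ℝ),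
        IsCenteredGaussian P (fun ω => ∑ i, c i * Y (xs i) ω))
    (ε : ℝ) (hε : 0 < ε)
    (hK : ∀ x y, ∫ ω, Y x ω * Y y ω ∂P = exactCov ε ‖x - y‖)
    (γ : ℝ) (hγ0 : 0 ≤ γ) (a : ℝ) (ha0 : 0 < a) (ha1 : a ≤ 1)
    (l : ℝ) (hεl : ε ≤ l) (hl1 : l ≤ 1) (S : Set (EuclideanSpace ℝ (Fin 2)))
    (hS : S ⊆ Metric.closedBall 0 l) (b : ℝ) :
    ∫⁻ ω, (∫⁻ v in S, ENNReal.ofReal (Real.exp (γ * Y v ω + b))) ^ a ∂P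
      ≤ ENNReal.ofReal (Real.exp (a * (b + γ ^ 2 / 2 * exactCov ε 0 + 2 * Real.log l +
        Real.log Real.pi - γ * (γ * (1 - a)) * (Real.log (1 / l) - Real.log 2)
        + (γ * (1 - a)) ^ 2 / 2 * (Real.log (1 / l) + 14))
        + (1 - a) * ((a * γ) ^ 2 / 2 * (Real.log (1 / l) + 14)))) := by
  have hl0 : 0 < l := hε.trans_le hεl
  obtain ⟨N, x, hN, hx, hA⟩ := exists_points hε (hεl.trans hl1) hl0 hl1
  have hm1 : ∀ x, Measurable (Y x) := fun x => hm.comp (measurable_const.prodMk measurable_id)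
  set Z : Ω → ℝ := fun ω => ∑ i, (1 / (N : ℝ)) * Y (x i) ω with hZ
  have hZm : Measurable Z := Finset.measurable_sum _ fun i _ => (hm1 _).const_mul _
  set s := γ * (1 - a) with hs
  have hs0 : 0 ≤ s := mul_nonneg hγ0 (by linarith)
  set J : Ω → ENNReal := fun ω => ∫⁻ v in S, ENNReal.ofReal (Real.exp (γ * Y v ω + b)) with hJ
  have hJm : Measurable J := by
    refine Measurable.lintegral_prod_left' (μ := volume.restrict S)
      (f := fun p : EuclideanSpace ℝ (Fin 2) × Ω =>
        ENNReal.ofReal (Real.exp (γ * Y p.1 p.2 + b))) ?_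
    fun_prop
  have hsplit : ∀ ω, J ω ^ a = (J ω * ENNReal.ofReal (Real.exp (- (s * Z ω)))) ^ a *
      ENNReal.ofReal (Real.exp (a * γ * Z ω)) ^ (1 - a) := by
    intro ω
    rw [ENNReal.mul_rpow_of_nonneg _ _ ha0.le, mul_assoc, exp_eq_ofReal_rpow, exp_eq_ofReal_rpow,
      ← ENNReal.ofReal_mul (Real.exp_pos _).le, ← Real.exp_add]
    have : -(s * Z ω) * a + a * γ * Z ω * (1 - a) = 0 := by rw [hs]; ring
    rw [this]; simp
  have hmul : ∀ ω, J ω * ENNReal.ofReal (Real.exp (- (s * Z ω)))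
      = ∫⁻ v in S, ENNReal.ofReal (Real.exp (γ * Y v ω + b - s * Z ω)) := by
    intro ω
    rw [hJ, ← lintegral_mul_const' _ _ ENNReal.ofReal_ne_top]
    refine lintegral_congr fun v => ?_
    rw [← ENNReal.ofReal_mul (Real.exp_pos _).le, ← Real.exp_add]
    rfl
  set D1 := b + γ ^ 2 / 2 * exactCov ε 0 - γ * s * (Real.log (1 / l) - Real.log 2)
        + s ^ 2 / 2 * (Real.log (1 / l) + 14) with hD1
  have hvol : volume S ≤ ENNReal.ofReal (Real.exp (2 * Real.log l + Real.log Real.pi)) := by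
    refine (measure_mono hS).trans (le_of_eq ?_)
    rw [EuclideanSpace.volume_closedBall_fin_two, Real.exp_add, Real.exp_log Real.pi_pos,
      mul_comm (2 : ℝ), Real.exp_mul, Real.exp_log hl0, ENNReal.ofReal_mul (by positivity),
      ← ENNReal.ofReal_pow hl0.le]
    norm_num
  have hfirst : ∫⁻ ω, J ω * ENNReal.ofReal (Real.exp (- (s * Z ω))) ∂P
      ≤ ENNReal.ofReal (Real.exp (D1 + (2 * Real.log l + Real.log Real.pi))) := by
    simp_rw [hmul]
    rw [lintegral_lintegral_swap (by
      apply Measurable.aemeasurable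
      simp only [Function.uncurry_def]
      have : Measurable fun p : Ω × EuclideanSpace ℝ (Fin 2) => Y p.2 p.1 :=
        hm.comp measurable_swap
      fun_prop)]
    calc _ ≤ ∫⁻ v in S, ENNReal.ofReal (Real.exp D1) := by
          refine setLIntegral_mono measurable_const fun v hv => ?_
          have hv' : ‖v‖ ≤ l := by simpa using hS hv
          have := tilt_exp Y hm1 hg _ hK N hN x _ (Real.log (1 / l) - Real.log 2) γ s v hγ0 hs0 hA
            (fun i => exactCov_lower hε hεl (by
              have := norm_sub_le v (x i)
              have := hx i
              linarith)) b
          simpa [hD1, hZ] using this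
      _ = ENNReal.ofReal (Real.exp D1) * volume S := by simp
      _ ≤ _ := by
        rw [Real.exp_add D1, ENNReal.ofReal_mul (Real.exp_pos _).le]
        exact mul_le_mul' le_rfl hvol
  have hsecond : ∫⁻ ω, ENNReal.ofReal (Real.exp (a * γ * Z ω)) ∂P
      ≤ ENNReal.ofReal (Real.exp ((a * γ) ^ 2 / 2 * (Real.log (1 / l) + 14))) := by
    have h := gauss_exp Y hm1 hg _ hK N x (fun _ => a * γ / N)
    have e : ∀ ω, a * γ * Z ω = ∑ i, a * γ / N * Y (x i) ω := by
      intro ω; rw [hZ]; simp only [Finset.mul_sum]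
      exact Finset.sum_congr rfl fun i _ => by ring
    simp_rw [e]
    rw [h]
    refine ENNReal.ofReal_le_ofReal (Real.exp_le_exp.2 ?_)
    simp_rw [← Finset.mul_sum]
    have hNr : (0 : ℝ) < N := by exact_mod_cast hN
    have e2 := mul_le_mul_of_nonneg_left hA (show 0 ≤ a * γ / N * (a * γ / N) by positivity)
    have e4 : a * γ / N * (a * γ / N) * ((N : ℝ) ^ 2 * (Real.log (1 / l) + 14))
      = (a * γ) ^ 2 * (Real.log (1 / l) + 14) := by field_simp
    rw [e4] at e2
    linarith
  calc _ = ∫⁻ ω, (J ω * ENNReal.ofReal (Real.exp (- (s * Z ω)))) ^ a *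
      ENNReal.ofReal (Real.exp (a * γ * Z ω)) ^ (1 - a) ∂P := lintegral_congr hsplit
    _ ≤ _ := ENNReal.lintegral_mul_norm_pow_le (by fun_prop) (by fun_prop) ha0.le
        (by linarith) (by ring)
    _ ≤ ENNReal.ofReal (Real.exp (D1 + (2 * Real.log l + Real.log Real.pi))) ^ a *
        ENNReal.ofReal (Real.exp ((a * γ) ^ 2 / 2 * (Real.log (1 / l) + 14))) ^ (1 - a) := by
      have : 0 ≤ 1 - a := by linarith
      gcongr
    _ = _ := by
      rw [exp_eq_ofReal_rpow, exp_eq_ofReal_rpow, ← ENNReal.ofReal_mul (Real.exp_pos _).le,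
        ← Real.exp_add, hD1]
      congr 2
      ring

lemma rpow_tsum_le (f : ℕ → ENNReal) {a : ℝ} (ha0 : 0 < a) (ha1 : a ≤ 1) :
    (∑' n, f n) ^ a ≤ ∑' n, f n ^ a := by
  have h1 := (ENNReal.summable (f := f)).hasSum.tendsto_sum_nat
  have h2 := (ENNReal.continuous_rpow_const (y := a)).continuousAt.tendsto.comp h1
  refine le_of_tendsto' h2 fun n => ?_
  refine le_trans ?_ (ENNReal.sum_le_tsum (Finset.range n))
  simp only [Function.comp]
  induction n with
  | zero => simp [ha0]
  | succ n ih =>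
    rw [Finset.sum_range_succ, Finset.sum_range_succ]
    exact (ENNReal.rpow_add_le_add_rpow _ _ ha0.le ha1).trans (by gcongr)

/-- **Uniform fractional-moment bound for the singular integral of an exactly scale-invariant
field** (Lemma A of the multifractal analysis, `d = 2`). If `γ ∈ [0,2)` and `a ∈ (0,1]`
satisfies `(2 − γ²/2)a − (γ²/2)a² > 0`, then
`E[(∫_{[0,1/2]²} e^{γX̄_ε(v) − (γ²/2)E[X̄_ε(v)²]} (|v|+ε)^{−γ²} dv)^a]` is bounded uniformly
in `ε ∈ (0,1]`. -/
theorem uniform_fractional_moment_bound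
    {Ω : Type*} [MeasurableSpace Ω] (P : Measure Ω) [IsProbabilityMeasure P]
    (X : ℝ → EuclideanSpace ℝ (Fin 2) → Ω → ℝ)
    (hXmeas : ∀ ε : ℝ, 0 < ε → ε ≤ 1 →
      Measurable (fun p : EuclideanSpace ℝ (Fin 2) × Ω => X ε p.1 p.2))
    (hXgauss : ∀ ε : ℝ, 0 < ε → ε ≤ 1 →
      ∀ (m : ℕ) (xs : Fin m → EuclideanSpace ℝ (Fin 2)) (c : Fin m → ℝ),
        IsCenteredGaussian P (fun ω => ∑ i, c i * X ε (xs i) ω))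
    (hXcov : ∀ ε : ℝ, 0 < ε → ε ≤ 1 → ∀ x y : EuclideanSpace ℝ (Fin 2),
      ∫ ω, X ε x ω * X ε y ω ∂P = exactCov ε ‖x - y‖)
    (γ : ℝ) (hγ0 : 0 ≤ γ) (hγ2 : γ < 2)
    (a : ℝ) (ha0 : 0 < a) (ha1 : a ≤ 1)
    (ha : 0 < (2 - γ ^ 2 / 2) * a - γ ^ 2 / 2 * a ^ 2) :
    ∃ C : ℝ, 0 < C ∧ ∀ ε : ℝ, 0 < ε → ε ≤ 1 →
      ∫⁻ ω, ENNReal.ofReal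
          ((∫ v in {v : EuclideanSpace ℝ (Fin 2) | ∀ i, v i ∈ Set.Icc (0 : ℝ) (1 / 2)},
            Real.exp (γ * X ε v ω - γ ^ 2 / 2 * (∫ ω', (X ε v ω') ^ 2 ∂P))
              / (‖v‖ + ε) ^ (γ ^ 2)) ^ a) ∂P
        ≤ ENNReal.ofReal C := by
  set κ := (2 - γ ^ 2 / 2) * a - γ ^ 2 / 2 * a ^ 2 with hκ
  set c := a * (Real.log Real.pi + 7 * (γ * (1 - a)) ^ 2 + γ * (γ * (1 - a)) * Real.log 2
    + γ ^ 2 * Real.log 2) + (1 - a) * (7 * (a * γ) ^ 2) with hc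
  set ρ := Real.exp (-(κ * Real.log 2)) with hρ
  have hρ0 : 0 < ρ := Real.exp_pos _
  have hρ1 : ρ < 1 := by
    rw [hρ, Real.exp_lt_one_iff]
    have := mul_pos ha (Real.log_pos (show (1 : ℝ) < 2 by norm_num))
    linarith
  have hsumm : Summable fun n : ℕ => Real.exp c * ρ ^ n :=
    (summable_geometric_of_lt_one hρ0.le hρ1).mul_left _
  refine ⟨∑' n : ℕ, Real.exp c * ρ ^ n, ?_, fun ε hε hε1 => ?_⟩
  · rw [tsum_mul_left, tsum_geometric_of_lt_one hρ0.le hρ1]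
    have := sub_pos.2 hρ1
    positivity
  have hm := hXmeas ε hε hε1
  have hK := hXcov ε hε hε1
  have hV : ∀ v, ∫ ω', (X ε v ω') ^ 2 ∂P = exactCov ε 0 := by
    intro v
    have := hK v v
    simpa [sq] using this
  simp_rw [hV]
  set Q : Set (EuclideanSpace ℝ (Fin 2)) :=
    {v : EuclideanSpace ℝ (Fin 2) | ∀ i, v i ∈ Set.Icc (0 : ℝ) (1 / 2)} with hQ
  let S : ℕ → Set (EuclideanSpace ℝ (Fin 2)) := fun n =>
    {v | ‖v‖ ≤ (1 / 2 : ℝ) ^ n ∧ ε ≤ (1 / 2 : ℝ) ^ n ∧ (1 / 2 : ℝ) ^ (n + 1) ≤ ‖v‖ + ε}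
  have hSm : ∀ n, MeasurableSet (S n) := by
    intro n
    simp only [S]
    exact (measurableSet_le measurable_norm measurable_const).inter
      ((MeasurableSet.const _).inter
        (measurableSet_le measurable_const (measurable_norm.add_const ε)))
  have hcover : Q ⊆ ⋃ n, S n := by
    intro v hv
    have hv1 : ‖v‖ ≤ 1 := by
      rw [EuclideanSpace.norm_eq, Real.sqrt_le_iff, one_pow, Fin.sum_univ_two]
      refine ⟨zero_le_one, ?_⟩
      simp only [Real.norm_eq_abs, sq_abs]
      have h0 := hv 0
      have h1 := hv 1
      simp only [Set.mem_Icc] at h0 h1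
      nlinarith [h0.1, h0.2, h1.1, h1.2]
    obtain ⟨n, h1, h2⟩ := exists_nat_pow_near_of_lt_one (x := max ‖v‖ ε) (y := (1 / 2 : ℝ))
      (lt_max_of_lt_right hε) (max_le hv1 hε1) (by norm_num) (by norm_num)
    refine Set.mem_iUnion.2 ⟨n, (le_max_left _ _).trans h2, (le_max_right _ _).trans h2, ?_⟩
    exact h1.le.trans (max_le (by linarith) (by linarith [norm_nonneg v]))
  let F : ℕ → Ω → ENNReal := fun n ω => ∫⁻ v in S n, ENNReal.ofReal (Real.exp (γ * X ε v ω +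
    (- (γ ^ 2 / 2 * exactCov ε 0) + γ ^ 2 * (n * Real.log 2 + Real.log 2))))
  have hlogn : ∀ n : ℕ, Real.log ((1 / 2 : ℝ) ^ n) = - (n * Real.log 2) := by
    intro n; rw [Real.log_pow]; simp
  have hpt : ∀ ω, ENNReal.ofReal ((∫ v in Q,
        Real.exp (γ * X ε v ω - γ ^ 2 / 2 * exactCov ε 0) / (‖v‖ + ε) ^ (γ ^ 2)) ^ a)
      ≤ ∑' n, F n ω ^ a := by
    intro ω
    have hpos : ∀ v : EuclideanSpace ℝ (Fin 2),
        0 ≤ Real.exp (γ * X ε v ω - γ ^ 2 / 2 * exactCov ε 0) / (‖v‖ + ε) ^ (γ ^ 2) :=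
      fun v => by positivity
    rw [← ENNReal.ofReal_rpow_of_nonneg (integral_nonneg hpos) ha0.le]
    refine le_trans ?_ (rpow_tsum_le (fun n => F n ω) ha0 ha1)
    refine ENNReal.rpow_le_rpow ?_ ha0.le
    have hXm : Measurable fun v => X ε v ω := hm.comp (measurable_id.prodMk measurable_const)
    rw [integral_eq_lintegral_of_nonneg_ae (Eventually.of_forall hpos)
      (Measurable.aestronglyMeasurable (by fun_prop))]
    refine ENNReal.ofReal_toReal_le.trans ?_
    refine (lintegral_mono_set hcover).trans ((lintegral_iUnion_le _ _).trans ?_)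
    refine ENNReal.tsum_le_tsum fun n => ?_
    refine setLIntegral_mono' (hSm n) fun v hv => ENNReal.ofReal_le_ofReal ?_
    obtain ⟨-, -, hv3⟩ := hv
    have hve : 0 < ‖v‖ + ε := by positivity
    rw [Real.rpow_def_of_pos hve, ← Real.exp_sub]
    refine Real.exp_le_exp.2 ?_
    have h1 := Real.log_le_log (by positivity) hv3
    rw [hlogn] at h1
    push_cast at h1
    have := mul_le_mul_of_nonneg_right h1 (sq_nonneg γ)
    linarith
  have hFm : ∀ n, Measurable (F n) := by
    intro n
    refine Measurable.lintegral_prod_left' (μ := volume.restrict (S n))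
      (f := fun p : EuclideanSpace ℝ (Fin 2) × Ω => ENNReal.ofReal (Real.exp (γ * X ε p.1 p.2 +
        (- (γ ^ 2 / 2 * exactCov ε 0) + γ ^ 2 * (n * Real.log 2 + Real.log 2))))) ?_
    fun_prop
  have hFb : ∀ n, ∫⁻ ω, F n ω ^ a ∂P ≤ ENNReal.ofReal (Real.exp c * ρ ^ n) := by
    intro n
    by_cases hn : ε ≤ (1 / 2 : ℝ) ^ n
    · refine (annulus_bound (X ε) hm (hXgauss ε hε hε1) ε hε hK γ hγ0 a ha0 ha1
        ((1 / 2 : ℝ) ^ n) hn (pow_le_one₀ (by norm_num) (by norm_num)) (S n)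
        (fun v hv => by simpa using hv.1) _).trans (le_of_eq ?_)
      rw [hρ, ← Real.exp_nat_mul, ← Real.exp_add]
      congr 2
      rw [one_div ((1 / 2 : ℝ) ^ n), Real.log_inv, hlogn, hc, hκ]
      ring
    · have : S n = ∅ := by
        ext v
        simp only [S, Set.mem_ofPred_eq, Set.mem_empty_iff_false, iff_false]
        tauto
      simp [F, this, ha0]
  calc _ ≤ ∫⁻ ω, ∑' n, F n ω ^ a ∂P := lintegral_mono hpt
    _ = ∑' n, ∫⁻ ω, F n ω ^ a ∂P :=
      lintegral_tsum fun n => ((hFm n).pow_const a).aemeasurable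
    _ ≤ ∑' n : ℕ, ENNReal.ofReal (Real.exp c * ρ ^ n) := ENNReal.tsum_le_tsum hFb
    _ = _ := (ENNReal.ofReal_tsum_of_nonneg (fun n => by positivity) hsumm).symm
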